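/- Let p ≥ 5 and let B_{2p+2} be the braid group with Artin generators σ_1,…,σ_{2p+1}, and let B⁺ be the submonoid of B_{2p+2} generated by σ_1,…,σ_{2p+1}. Let ρ̌ = σ_1^{−1}·(∏_{i=4}^{p−1} (σ_3σ_4⋯σ_{2(p−i)+2})(σ_1σ_2⋯σ_{2(p−i)+1}))·σ_1 (product in increasing order of i). Then for every index 1 ≤ j ≤ 2p+1, the element σ_j^{−1}ρ̌ belongs to B⁺ if and only if j is odd and 3 ≤ j ≤ 2p−7. In other words, the starting set S(ρ̌) = {j : σ_j left-divides ρ̌ in B⁺} equals {3, 5, 7, …, 2p−7}. -/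

import Mathlib

/-- The Artin braid relations on `m` generators (generator `i : Fin m`
    represents the Artin generator `σ_{i+1}`). -/
def braidRels (m : ℕ) : Set (FreeGroup (Fin m)) :=
  {r | (∃ i j : Fin m, (i : ℕ) + 2 ≤ (j : ℕ) ∧
        r = FreeGroup.of i * FreeGroup.of j * (FreeGroup.of i)⁻¹ * (FreeGroup.of j)⁻¹) ∨
      (∃ i j : Fin m, (j : ℕ) = (i : ℕ) + 1 ∧
        r = FreeGroup.of i * FreeGroup.of j * FreeGroup.of i *
            (FreeGroup.of j * FreeGroup.of i * FreeGroup.of j)⁻¹)}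

/-- The braid group on `n` strands, presented by the Artin generators
    `σ_1, …, σ_{n-1}` and the braid relations. -/
def BraidGroup (n : ℕ) : Type := PresentedGroup (braidRels (n - 1))

instance (n : ℕ) : Group (BraidGroup n) :=
  inferInstanceAs (Group (PresentedGroup (braidRels (n - 1))))

/-- The Artin generator `σ_i` of `BraidGroup n` (1-based: `1 ≤ i ≤ n-1`);
    out-of-range indices give the identity. -/
def σ (n i : ℕ) : BraidGroup n :=
  if h : 1 ≤ i ∧ i ≤ n - 1 then
    (PresentedGroup.of ⟨i - 1, by omega⟩ : PresentedGroup (braidRels (n - 1)))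
  else 1

/-- The ascending product of generators `σ_a σ_{a+1} ⋯ σ_b` in `B_n`. -/
def asc (n a b : ℕ) : BraidGroup n :=
  ((List.range (b + 1 - a)).map (fun t => σ n (a + t))).prod

/-- The positive braid monoid `B⁺`: the submonoid of `B_n` generated by the
Artin generators `σ_1, …, σ_{n-1}`. -/
def Bpos (n : ℕ) : Submonoid (BraidGroup n) :=
  Submonoid.closure {x | ∃ i, 1 ≤ i ∧ i ≤ n - 1 ∧ x = σ n i}

/-- The conjugator `ρ̌ = ρ_{Ǎ}` of formula (∗):
`σ_1⁻¹ (∏_{i=4}^{p-1} (σ_3⋯σ_{2(p-i)+2})(σ_1⋯σ_{2(p-i)+1})) σ_1` in `B_{2p+2}`. -/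
def rhoCheck (p : ℕ) : BraidGroup (2 * p + 2) :=
  (σ (2 * p + 2) 1)⁻¹ *
    ((List.range (p - 4)).map (fun t =>
      asc (2 * p + 2) 3 (2 * (p - (4 + t)) + 2) *
      asc (2 * p + 2) 1 (2 * (p - (4 + t)) + 1))).prod *
    σ (2 * p + 2) 1

def swp (i x : ℕ) : ℕ := if x = i then i + 1 else if x = i + 1 then i else x

def crs (i x y : ℕ) : ℤ := if (x = i ∧ y = i + 1) ∨ (x = i + 1 ∧ y = i) then 1 else 0

theorem swp_swp (i x : ℕ) : swp i (swp i x) = x := by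
  unfold swp; split_ifs <;> omega

theorem crs_swp (i x y : ℕ) : crs i (swp i x) (swp i y) = crs i x y := by
  unfold crs swp; grind

theorem crs_nonneg (i x y : ℕ) : 0 ≤ crs i x y := by
  unfold crs; split_ifs <;> omega

def actE (i : ℕ) : Equiv.Perm (ℕ × ℕ × ℤ) where
  toFun q := (swp i q.1, swp i q.2.1, q.2.2 + crs i q.1 q.2.1)
  invFun q := (swp i q.1, swp i q.2.1, q.2.2 - crs i q.1 q.2.1)
  left_inv q := by simp [swp_swp, crs_swp]
  right_inv q := by simp [swp_swp, crs_swp]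

theorem actE_apply (i x y : ℕ) (z : ℤ) :
    actE i (x, y, z) = (swp i x, swp i y, z + crs i x y) := rfl

theorem swp_comm (i j x : ℕ) (h : i + 2 ≤ j) : swp i (swp j x) = swp j (swp i x) := by
  unfold swp; grind

theorem crs_far (i j x y : ℕ) (h : i + 2 ≤ j) : crs i (swp j x) (swp j y) = crs i x y := by
  unfold crs swp; grind

theorem crs_far' (i j x y : ℕ) (h : i + 2 ≤ j) : crs j (swp i x) (swp i y) = crs j x y := by
  unfold crs swp; grind

theorem actE_comm (i j : ℕ) (h : i + 2 ≤ j) : actE i * actE j = actE j * actE i := by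
  ext1 ⟨x, y, z⟩
  simp only [Equiv.Perm.mul_apply, actE_apply, swp_comm i j _ h, crs_far _ _ _ _ h,
    crs_far' _ _ _ _ h]
  congr 2; ring

theorem swp_braid (i x : ℕ) :
    swp i (swp (i+1) (swp i x)) = swp (i+1) (swp i (swp (i+1) x)) := by
  unfold swp; grind

theorem crs_braid1 (i x y : ℕ) :
    crs i (swp (i+1) (swp i x)) (swp (i+1) (swp i y)) = crs (i+1) x y := by
  unfold crs swp; grind

theorem crs_braid2 (i x y : ℕ) :
    crs (i+1) (swp i (swp (i+1) x)) (swp i (swp (i+1) y)) = crs i x y := by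
  unfold crs swp; grind

theorem crs_braid3 (i x y : ℕ) :
    crs (i+1) (swp i x) (swp i y) = crs i (swp (i+1) x) (swp (i+1) y) := by
  unfold crs swp; grind

theorem actE_braid (i : ℕ) :
    actE i * actE (i+1) * actE i = actE (i+1) * actE i * actE (i+1) := by
  ext1 ⟨x, y, z⟩
  simp only [Equiv.Perm.mul_apply, actE_apply, swp_braid, crs_braid1, crs_braid2]
  rw [crs_braid3]
  congr 2; ring

theorem act_rels (n : ℕ) : ∀ r ∈ braidRels (n - 1),
    FreeGroup.lift (fun i : Fin (n - 1) => actE (i + 1)) r = 1 := by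
  rintro r (⟨i, j, h, rfl⟩ | ⟨i, j, h, rfl⟩)
  · simp only [map_mul, map_inv, FreeGroup.lift_apply_of]
    rw [actE_comm _ _ (by omega)]; group
  · simp only [map_mul, map_inv, FreeGroup.lift_apply_of, h]
    rw [actE_braid]; group

def act (n : ℕ) : BraidGroup n →* Equiv.Perm (ℕ × ℕ × ℤ) :=
  (PresentedGroup.toGroup (act_rels n) : PresentedGroup (braidRels (n - 1)) →* _)

theorem σ_in (n i : ℕ) (h1 : 1 ≤ i) (h2 : i ≤ n - 1) : σ n i =
    (PresentedGroup.of ⟨i - 1, by omega⟩ : PresentedGroup (braidRels (n - 1))) :=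
  dif_pos ⟨h1, h2⟩

theorem σ_out (n i : ℕ) (h : ¬ (1 ≤ i ∧ i ≤ n - 1)) : σ n i = 1 := dif_neg h

theorem act_σ (n i : ℕ) (h1 : 1 ≤ i) (h2 : i ≤ n - 1) : act n (σ n i) = actE i := by
  rw [σ_in n i h1 h2]
  have := PresentedGroup.toGroup.of (act_rels n) (x := (⟨i - 1, by omega⟩ : Fin (n - 1)))
  refine this.trans ?_
  congr 1
  simp; omega

theorem act_pos (n : ℕ) (x : BraidGroup n) (hx : x ∈ Bpos n) :
    ∀ q, q.2.2 ≤ (act n x q).2.2 := by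
  unfold Bpos at hx
  induction hx using Submonoid.closure_induction with
  | mem x hx =>
    obtain ⟨i, h1, h2, rfl⟩ := hx
    rintro ⟨x, y, z⟩
    rw [act_σ n i h1 h2, actE_apply]
    have := crs_nonneg i x y
    simp; omega
  | one => simp
  | mul x y _ _ hx hy =>
    intro q
    rw [map_mul, Equiv.Perm.mul_apply]
    exact (hy q).trans (hx _)

/-- `x` brings a pair of strands without crossing to positions `a, b`. -/
def Reach (n : ℕ) (x : BraidGroup n) (a b : ℕ) : Prop :=
  ∃ c d, act n x (c, d, 0) = (a, b, 0)

theorem Reach.mul {n : ℕ} {x y : BraidGroup n} {a b c d : ℕ} (h : Reach n y c d)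
    (hx : act n x (c, d, 0) = (a, b, 0)) : Reach n (x * y) a b := by
  obtain ⟨e, f, h⟩ := h
  exact ⟨e, f, by rw [map_mul, Equiv.Perm.mul_apply, h, hx]⟩

theorem not_pos_of_reach (n : ℕ) (x : BraidGroup n) (j : ℕ) (h1 : 1 ≤ j) (h2 : j ≤ n - 1)
    (h : Reach n x j (j + 1)) : (σ n j)⁻¹ * x ∉ Bpos n := by
  intro hx
  obtain ⟨c, d, h⟩ := h
  have := act_pos n _ hx (c, d, 0)
  rw [map_mul, Equiv.Perm.mul_apply, h, map_inv, act_σ n j h1 h2] at this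
  have e : (actE j)⁻¹ (j, j + 1, 0) = (j + 1, j, -1) := by
    rw [Equiv.Perm.inv_eq_iff_eq, actE_apply]
    simp [swp, crs]
  rw [e] at this
  norm_num at this

theorem asc_succ (n a b : ℕ) (h : a ≤ b + 1) : asc n a (b + 1) = asc n a b * σ n (b + 1) := by
  unfold asc
  rw [show b + 1 + 1 - a = (b + 1 - a) + 1 by omega, List.range_succ]
  simp
  congr 1; omega

theorem asc_nil (n a b : ℕ) (h : b < a) : asc n a b = 1 := by
  unfold asc
  rw [show b + 1 - a = 0 by omega]; simp

theorem asc_head (n a b : ℕ) (h : a ≤ b) : asc n a b = σ n a * asc n (a + 1) b := by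
  unfold asc
  rw [show b + 1 - a = (b - a) + 1 by omega, List.range_succ_eq_map]
  simp [Function.comp_def, Nat.add_assoc, Nat.add_comm 1]

def cyc (a b x : ℕ) : ℕ := if x = b + 1 then a else if a ≤ x ∧ x ≤ b then x + 1 else x

theorem act_asc (n a b : ℕ) (ha : 1 ≤ a) (hab : a ≤ b + 1) (hb : b ≤ n - 1) (x y : ℕ)
    (hxy : x ≠ y)
    (h : ¬ (x = b + 1 ∧ a ≤ y ∧ y ≤ b)) (h' : ¬ (y = b + 1 ∧ a ≤ x ∧ x ≤ b)) :
    act n (asc n a b) (x, y, 0) = (cyc a b x, cyc a b y, 0) := by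
  induction b generalizing x y with
  | zero =>
    rw [asc_nil n a 0 (by omega)]
    unfold cyc; simp only [map_one, Equiv.Perm.one_apply, Prod.mk.injEq]; grind
  | succ b ih =>
    by_cases hab' : a = b + 2
    · rw [asc_nil n a _ (by omega)]
      unfold cyc; simp only [map_one, Equiv.Perm.one_apply, Prod.mk.injEq]; grind
    rw [asc_succ n a b (by omega), map_mul, Equiv.Perm.mul_apply,
      act_σ n _ (by omega) hb, actE_apply]
    have hc : crs (b+1) x y = 0 := by
      unfold crs; split_ifs <;> omega
    rw [hc, add_zero, ih (by omega) (by omega)]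
    · congr 1
      · unfold cyc swp; grind
      · congr 1; unfold cyc swp; grind
    all_goals unfold swp; grind

def Fk (n k : ℕ) : BraidGroup n := asc n 3 (2 * k + 2) * asc n 1 (2 * k + 1)

def Gk (n k : ℕ) : BraidGroup n := asc n 3 (2 * k + 2) * asc n 2 (2 * k + 1)

def Pk (n : ℕ) : ℕ → BraidGroup n
  | 0 => 1
  | k + 1 => Fk n (k + 1) * Pk n k

theorem prod_eq (n m : ℕ) : ((List.range m).map (fun t => Fk n (m - t))).prod = Pk n m := by
  induction m with
  | zero => rfl
  | succ m ih =>
    rw [List.range_succ_eq_map, Pk, ← ih]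
    simp [Function.comp_def]

theorem pres_comm (m : ℕ) (i j : Fin m) (h : (i : ℕ) + 2 ≤ j) :
    (PresentedGroup.of i * PresentedGroup.of j : PresentedGroup (braidRels m)) =
      PresentedGroup.of j * PresentedGroup.of i := by
  have := PresentedGroup.one_of_mem (rels := braidRels m)
    (x := FreeGroup.of i * FreeGroup.of j * (FreeGroup.of i)⁻¹ * (FreeGroup.of j)⁻¹)
    (Or.inl ⟨i, j, h, rfl⟩)
  simp only [map_mul, map_inv] at this
  rw [mul_inv_eq_one, mul_inv_eq_iff_eq_mul] at this
  exact this

theorem pres_braid (m : ℕ) (i j : Fin m) (h : (j : ℕ) = i + 1) :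
    (PresentedGroup.of i * PresentedGroup.of j * PresentedGroup.of i :
      PresentedGroup (braidRels m)) =
      PresentedGroup.of j * PresentedGroup.of i * PresentedGroup.of j := by
  have := PresentedGroup.one_of_mem (rels := braidRels m)
    (x := FreeGroup.of i * FreeGroup.of j * FreeGroup.of i *
            (FreeGroup.of j * FreeGroup.of i * FreeGroup.of j)⁻¹)
    (Or.inr ⟨i, j, h, rfl⟩)
  simp only [map_mul, map_inv] at this
  rw [mul_inv_eq_one] at this
  exact this

theorem σ_comm (n i j : ℕ) (h : i + 2 ≤ j) : σ n i * σ n j = σ n j * σ n i := by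
  by_cases h1 : 1 ≤ i ∧ i ≤ n - 1
  · by_cases h2 : 1 ≤ j ∧ j ≤ n - 1
    · rw [σ_in n i h1.1 h1.2, σ_in n j h2.1 h2.2]
      exact pres_comm _ _ _ (by simp only; omega)
    · rw [σ_out n j h2]; simp
  · rw [σ_out n i h1]; simp

theorem σ_braid (n i : ℕ) (h1 : 1 ≤ i) (h2 : i + 1 ≤ n - 1) :
    σ n i * σ n (i+1) * σ n i = σ n (i+1) * σ n i * σ n (i+1) := by
  rw [σ_in n i h1 (by omega), σ_in n (i+1) (by omega) h2]
  exact pres_braid _ _ _ (by simp only; omega)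

theorem asc_comm_far (n a b t : ℕ) (h : b + 2 ≤ t) : asc n a b * σ n t = σ n t * asc n a b := by
  induction b with
  | zero =>
    by_cases ha : a = 0
    · subst ha; simp [asc, σ]
    · rw [asc_nil n a 0 (by omega)]; simp
  | succ b ih =>
    by_cases ha : a ≤ b + 1
    · rw [asc_succ n a b ha, mul_assoc, σ_comm n _ _ h, ← mul_assoc, ih (by omega), mul_assoc]
    · rw [asc_nil n a _ (by omega)]; simp

theorem asc_comm_low (n a b t : ℕ) (h : t + 2 ≤ a) : asc n a b * σ n t = σ n t * asc n a b := by
  induction b with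
  | zero => rw [asc_nil n a 0 (by omega)]; simp
  | succ b ih =>
    by_cases ha : a ≤ b + 1
    · rw [asc_succ n a b ha, mul_assoc, ← σ_comm n _ _ (by omega : t + 2 ≤ b + 1), ← mul_assoc, ih,
        mul_assoc]
    · rw [asc_nil n a _ (by omega)]; simp

theorem asc_push (n a b t : ℕ) (ha : 1 ≤ a) (h : a ≤ t) (h' : t + 1 ≤ b) (hb : b ≤ n - 1) :
    asc n a b * σ n t = σ n (t + 1) * asc n a b := by
  induction b with
  | zero => omega
  | succ b ih =>
    by_cases e : t = b
    · subst e
      obtain ⟨s, rfl⟩ : ∃ s, t = s + 1 := ⟨t - 1, by omega⟩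
      rw [asc_succ n a _ (by omega), asc_succ n a s (by omega)]
      have := σ_braid n (s+1) (by omega) (by omega)
      calc _ = asc n a s * (σ n (s+1) * σ n (s+1+1) * σ n (s+1)) := by group
        _ = (asc n a s * σ n (s+1+1)) * σ n (s+1) * σ n (s+1+1) := by rw [this]; group
        _ = _ := by rw [asc_comm_far n a s _ (by omega)]; group
    · rw [asc_succ n a b (by omega), mul_assoc, ← σ_comm n t _ (by omega), ← mul_assoc,
        ih (by omega) (by omega), mul_assoc]

theorem Fk_push (n k t : ℕ) (h : 2 ≤ t) (h' : t ≤ 2 * k) (hk : 2 * k + 2 ≤ n - 1) :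
    Fk n k * σ n t = σ n (t + 2) * Fk n k := by
  unfold Fk
  rw [mul_assoc, asc_push n 1 _ t (by omega) (by omega) (by omega) (by omega), ← mul_assoc,
    asc_push n 3 _ (t+1) (by omega) (by omega) (by omega) (by omega), mul_assoc]

theorem Fk_eq (n k : ℕ) : Fk n k = σ n 1 * Gk n k := by
  unfold Fk Gk
  rw [asc_head n 1 _ (by omega), ← mul_assoc, asc_comm_low n 3 _ 1 (by omega), mul_assoc]

theorem σ_pos (n i : ℕ) : σ n i ∈ Bpos n := by
  by_cases h : 1 ≤ i ∧ i ≤ n - 1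
  · exact Submonoid.subset_closure ⟨i, h.1, h.2, rfl⟩
  · rw [σ_out n i h]; exact one_mem _

theorem asc_pos (n a b : ℕ) : asc n a b ∈ Bpos n := by
  unfold asc
  apply Submonoid.list_prod_mem
  intro x hx
  obtain ⟨t, _, rfl⟩ := List.mem_map.1 hx
  exact σ_pos _ _

theorem Fk_pos (n k : ℕ) : Fk n k ∈ Bpos n := mul_mem (asc_pos _ _ _) (asc_pos _ _ _)
theorem Gk_pos (n k : ℕ) : Gk n k ∈ Bpos n := mul_mem (asc_pos _ _ _) (asc_pos _ _ _)
theorem Pk_pos (n k : ℕ) : Pk n k ∈ Bpos n := by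
  induction k with
  | zero => exact one_mem _
  | succ k ih => exact mul_mem (Fk_pos _ _) ih

theorem div_Pk (n k i : ℕ) (hi : 1 ≤ i) (hik : i ≤ k) (hk : 2 * k + 2 ≤ n - 1) :
    (σ n (2 * i + 1))⁻¹ * Pk n k ∈ Bpos n := by
  induction k generalizing i with
  | zero => omega
  | succ k ih =>
    rw [Pk]
    by_cases h : i = 1
    · subst h
      unfold Fk
      rw [asc_head n 3 _ (by omega)]
      have := mul_mem (mul_mem (asc_pos n (3+1) (2*(k+1)+2)) (asc_pos n 1 (2*(k+1)+1))) (Pk_pos n k)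
      convert this using 1
      group
    · obtain ⟨s, rfl⟩ : ∃ s, i = s + 1 := ⟨i - 1, by omega⟩
      have e := Fk_push n (k+1) (2*s+1) (by omega) (by omega) hk
      have := mul_mem (Fk_pos n (k+1)) (ih s (by omega) (by omega) (by omega))
      convert this using 1
      rw [inv_mul_eq_iff_eq_mul, show 2*(s+1)+1 = 2*s+1+2 by ring, ← mul_assoc, ← mul_assoc, ← e]
      group

theorem rho_eq (m : ℕ) : rhoCheck (m + 1 + 4) =
    Gk (2 * (m + 1 + 4) + 2) (m + 1) * (Pk (2 * (m + 1 + 4) + 2) m * σ (2 * (m + 1 + 4) + 2) 1) := by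
  have e : ∀ t, m + 1 + 4 - (4 + t) = m + 1 - t := by intro t; omega
  have := prod_eq (2 * (m + 1 + 4) + 2) (m + 1)
  unfold Fk at this
  unfold rhoCheck
  simp only [e, show m + 1 + 4 - 4 = m + 1 by omega]
  rw [this, Pk, Fk_eq]
  group

theorem act_Fk (n k x y : ℕ) (hk : 2 * k + 2 ≤ n - 1) (hxy : x ≠ y)
    (h : x ≤ 2 * k + 1 ∨ 2 * k + 4 ≤ x ∨ (x = 2 * k + 2 ∧ 2 * k + 3 ≤ y))
    (h' : y ≤ 2 * k + 1 ∨ 2 * k + 4 ≤ y ∨ (y = 2 * k + 3 ∧ x = 1)) :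
    act n (Fk n k) (x, y, 0) =
      (cyc 3 (2*k+2) (cyc 1 (2*k+1) x), cyc 3 (2*k+2) (cyc 1 (2*k+1) y), 0) := by
  unfold Fk
  rw [map_mul, Equiv.Perm.mul_apply, act_asc n 1 _ (by omega) (by omega) (by omega) x y hxy
    (by omega) (by omega), act_asc n 3 _ (by omega) (by omega) (by omega)]
  all_goals unfold cyc; grind

theorem act_Gk (n k x y : ℕ) (hk : 2 * k + 2 ≤ n - 1) (hxy : x < y)
    (h : x ≤ 2 * k + 1 ∨ 2 * k + 4 ≤ x ∨ (x = 2 * k + 2 ∧ 2 * k + 3 ≤ y))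
    (h' : y ≤ 2 * k + 1 ∨ 2 * k + 4 ≤ y ∨ (y = 2 * k + 2 ∧ x = 1) ∨ (y = 2 * k + 3 ∧ x = 2 * k + 2)) :
    act n (Gk n k) (x, y, 0) =
      (cyc 3 (2*k+2) (cyc 2 (2*k+1) x), cyc 3 (2*k+2) (cyc 2 (2*k+1) y), 0) := by
  unfold Gk
  rw [map_mul, Equiv.Perm.mul_apply, act_asc n 2 _ (by omega) (by omega) (by omega) x y (by omega)
    (by omega) (by omega), act_asc n 3 _ (by omega) (by omega) (by omega)]
  all_goals unfold cyc; grind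

theorem reach_one (n x y c d : ℕ) (hn : 2 ≤ n) (hc : swp 1 c = x) (hd : swp 1 d = y)
    (h : crs 1 c d = 0) : Reach n (1 * σ n 1) x y :=
  ⟨c, d, by rw [one_mul, act_σ n 1 le_rfl (by omega), actE_apply, hc, hd, h]; rfl⟩

theorem Fk_step (n k x y a b : ℕ) (hr : Reach n (Pk n k * σ n 1) x y)
    (hk : 2 * k + 4 ≤ n - 1) (hxy : x ≠ y)
    (h : x ≤ 2 * k + 3 ∨ 2 * k + 6 ≤ x ∨ (x = 2 * k + 4 ∧ 2 * k + 5 ≤ y))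
    (h' : y ≤ 2 * k + 3 ∨ 2 * k + 6 ≤ y ∨ (y = 2 * k + 5 ∧ x = 1))
    (ha : cyc 3 (2*(k+1)+2) (cyc 1 (2*(k+1)+1) x) = a)
    (hb : cyc 3 (2*(k+1)+2) (cyc 1 (2*(k+1)+1) y) = b) :
    Reach n (Pk n (k+1) * σ n 1) a b := by
  rw [Pk, mul_assoc]
  refine hr.mul ?_
  rw [act_Fk n (k+1) x y (by omega) hxy (by omega) (by omega), ha, hb]

/-- far strands are fixed -/
theorem reach_fix (n k x y : ℕ) (hk : 2 * k + 2 ≤ n - 1) (hxy : x < y) (h : 2 * k + 4 ≤ x) :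
    Reach n (Pk n k * σ n 1) x y := by
  induction k with
  | zero =>
    exact reach_one n x y x y (by omega) (by unfold swp; grind) (by unfold swp; grind)
      (by unfold crs; grind)
  | succ k ih =>
    refine Fk_step n k x y x y (ih (by omega) (by omega)) (by omega) (by omega) (by omega)
      (by omega) ?_ ?_ <;> unfold cyc <;> grind

theorem reach_head (n k y : ℕ) (hk : 2 * k + 2 ≤ n - 1) (h : 2 * k + 4 ≤ y) :
    Reach n (Pk n k * σ n 1) 1 y := by
  cases k with
  | zero =>
    exact reach_one n 1 y 2 y (by omega) (by unfold swp; grind) (by unfold swp; grind)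
      (by unfold crs; grind)
  | succ k =>
    refine Fk_step n k (2*k+4) y 1 y (reach_fix n k _ _ (by omega) (by omega) (by omega))
      (by omega) (by omega) (by omega) (by omega) ?_ ?_ <;> unfold cyc <;> grind

theorem reach_last (n k y : ℕ) (hk : 2 * k + 2 ≤ n - 1) (h : 2 * k + 4 ≤ y) :
    Reach n (Pk n k * σ n 1) (2 * k + 3) y := by
  induction k with
  | zero =>
    exact reach_one n 3 y 3 y (by omega) (by unfold swp; grind) (by unfold swp; grind)
      (by unfold crs; grind)
  | succ k ih =>
    refine Fk_step n k (2*k+3) y _ y (ih (by omega) (by omega))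
      (by omega) (by omega) (by omega) (by omega) ?_ ?_ <;> unfold cyc <;> grind

theorem reach_even (n k i : ℕ) (hk : 2 * k + 2 ≤ n - 1) (hi : 1 ≤ i) (h : i ≤ k + 1) :
    Reach n (Pk n k * σ n 1) (2 * i) (2 * i + 1) := by
  induction k generalizing i with
  | zero =>
    obtain rfl : i = 1 := by omega
    exact reach_one n 2 3 1 3 (by omega) (by unfold swp; grind) (by unfold swp; grind)
      (by unfold crs; grind)
  | succ k ih =>
    by_cases h1 : i = 1
    · subst h1
      refine Fk_step n k 1 (2*k+5) _ _ (reach_head n k _ (by omega) (by omega))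
        (by omega) (by omega) (by omega) (by omega) ?_ ?_ <;> unfold cyc <;> grind
    · obtain ⟨s, rfl⟩ : ∃ s, i = s + 1 := ⟨i - 1, by omega⟩
      refine Fk_step n k (2*s) (2*s+1) _ _ (ih s (by omega) (by omega) (by omega))
        (by omega) (by omega) (by omega) (by omega) ?_ ?_ <;> unfold cyc <;> grind

theorem Gk_step (n k x y a b : ℕ) (hr : Reach n (Pk n k * σ n 1) x y)
    (hk : 2 * k + 4 ≤ n - 1) (hxy : x < y)
    (h : x ≤ 2 * k + 3 ∨ 2 * k + 6 ≤ x ∨ (x = 2 * k + 4 ∧ 2 * k + 5 ≤ y))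
    (h' : y ≤ 2 * k + 3 ∨ 2 * k + 6 ≤ y ∨ (y = 2 * k + 4 ∧ x = 1) ∨
      (y = 2 * k + 5 ∧ x = 2 * k + 4))
    (ha : cyc 3 (2*(k+1)+2) (cyc 2 (2*(k+1)+1) x) = a)
    (hb : cyc 3 (2*(k+1)+2) (cyc 2 (2*(k+1)+1) y) = b) :
    Reach n (Gk n (k+1) * (Pk n k * σ n 1)) a b := by
  refine hr.mul ?_
  rw [act_Gk n (k+1) x y (by omega) hxy (by omega) (by omega), ha, hb]

/-- The starting set of `ρ̌` is `{3, 5, 7, …, 2p-7}`: for `1 ≤ j ≤ 2p+1`,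
`σ_j` left-divides `ρ̌` in the positive monoid `B⁺` iff `j` is odd and
`3 ≤ j ≤ 2p-7`. -/
theorem startingSet_rhoCheck (p : ℕ) (hp : 5 ≤ p) :
    ∀ j : ℕ, 1 ≤ j → j ≤ 2 * p + 1 →
      ((σ (2 * p + 2) j)⁻¹ * rhoCheck p ∈ Bpos (2 * p + 2) ↔
        (Odd j ∧ 3 ≤ j ∧ j ≤ 2 * p - 7)) := by
  intro j hj1 hj2
  obtain ⟨m, rfl⟩ : ∃ m, p = m + 1 + 4 := ⟨p - 5, by omega⟩
  rw [rho_eq]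
  have hN : 2 * m + 11 ≤ 2 * (m + 1 + 4) + 2 - 1 := by omega
  have hjN : j ≤ 2 * (m + 1 + 4) + 2 - 1 := by omega
  have hb : j ≤ 2 * (m + 1 + 4) - 7 ↔ j ≤ 2 * m + 3 := by omega
  rw [hb]
  generalize 2 * (m + 1 + 4) + 2 = n at *
  constructor
  · intro hx
    by_contra hcon
    refine not_pos_of_reach n _ j hj1 hjN ?_ hx
    by_cases c1 : j = 1
    · subst c1
      refine Gk_step n m 1 (2*m+4) _ _ (reach_head n m _ (by omega) (by omega))
        (by omega) (by omega) (by omega) (by omega) ?_ ?_ <;> unfold cyc <;> grind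
    by_cases c2 : j = 2
    · subst c2
      refine Gk_step n m (2*m+4) (2*m+5) _ _ (reach_fix n m _ _ (by omega) (by omega) (by omega))
        (by omega) (by omega) (by omega) (by omega) ?_ ?_ <;> unfold cyc <;> grind
    by_cases c3 : 2 * m + 6 ≤ j
    · refine Gk_step n m j (j+1) _ _ (reach_fix n m _ _ (by omega) (by omega) (by omega))
        (by omega) (by omega) (by omega) (by omega) ?_ ?_ <;> unfold cyc <;> grind
    by_cases c4 : j = 2 * m + 5
    · subst c4
      refine Gk_step n m (2*m+3) (2*m+6) _ _ (reach_last n m _ (by omega) (by omega))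
        (by omega) (by omega) (by omega) (by omega) ?_ ?_ <;> unfold cyc <;> grind
    have hev : ¬ Odd j := fun ho => hcon ⟨ho, by omega, by
      obtain ⟨r, rfl⟩ := ho; omega⟩
    rw [Nat.not_odd_iff_even] at hev
    obtain ⟨s, hs⟩ := hev
    obtain ⟨i, rfl⟩ : ∃ i, s = i + 1 := ⟨s - 1, by omega⟩
    refine Gk_step n m (2*i) (2*i+1) _ _ (reach_even n m i (by omega) (by omega) (by omega))
        (by omega) (by omega) (by omega) (by omega) ?_ ?_ <;> unfold cyc <;> grind
  · rintro ⟨⟨i, rfl⟩, h3, h7⟩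
    by_cases h : i = 1
    · subst h
      unfold Gk
      rw [asc_head n 3 _ (by omega)]
      have := mul_mem (mul_mem (asc_pos n (3+1) (2*(m+1)+2)) (asc_pos n 2 (2*(m+1)+1)))
        (mul_mem (Pk_pos n m) (σ_pos n 1))
      convert this using 1
      group
    · obtain ⟨s, rfl⟩ : ∃ s, i = s + 1 := ⟨i - 1, by omega⟩
      have e := Fk_push n (m+1) (2*s+1) (by omega) (by omega) (by omega)
      rw [Fk_eq, ← mul_assoc, ← σ_comm n 1 _ (by omega), mul_assoc, mul_assoc] at e
      have e := mul_left_cancel e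
      have := mul_mem (mul_mem (Gk_pos n (m+1))
        (div_Pk n m s (by omega) (by omega) (by omega))) (σ_pos n 1)
      convert this using 1
      rw [inv_mul_eq_iff_eq_mul, show 2*(s+1)+1 = 2*s+1+2 by ring, ← mul_assoc, ← mul_assoc,
        ← mul_assoc, ← mul_assoc, ← e]
      group
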